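/- Consider the edge-based discrete diffusion protocol on a graph G on n ≥ 2 vertices with maximum degree Δ, with parameter γ > 1, starting from x^{(0)} = ξ^{(0)} ∈ ℤ^n, alongside the continuous diffusion ξ^{(t)} = ξ^{(0)}P^t. Then for any round t, P( max_{w∈V} |x_w^{(t)} − ξ_w^{(t)}| ≥ 4·√(log n)·√(γΔ/(2 − 2/γ)) ) ≤ 2·n^{−1}; in particular, for constant γ the deviation between the discrete and continuous case is O(√(Δ·log n)) with probability at least 1 − 2n^{−1}. -/

import Mathlib

namespace LB


/-- The diffusion matrix `P = P(γ)` of a graph `G` with maximum degree `Δ`: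
`P_{u,v} = 1/(γΔ)` if `{u,v} ∈ E`, `P_{u,u} = 1 - deg(u)/(γΔ)`, and `0` otherwise. -/
noncomputable def diffMatrix {n : ℕ} (G : SimpleGraph (Fin n)) [DecidableRel G.Adj]
    (γ : ℝ) : Matrix (Fin n) (Fin n) ℝ :=
  Matrix.of fun u v =>
    if G.Adj u v then 1 / (γ * G.maxDegree)
    else if u = v then 1 - (G.degree u : ℝ) / (γ * G.maxDegree)
    else 0

/-- Sum of `g u v` over the edges `[u:v] ∈ E` (i.e. `{u,v} ∈ E` with `u < v`). -/
noncomputable def edgeSum {n : ℕ} (G : SimpleGraph (Fin n)) [DecidableRel G.Adj]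
    (g : Fin n → Fin n → ℝ) : ℝ :=
  ∑ u : Fin n, ∑ v : Fin n, if u < v ∧ G.Adj u v then g u v else 0

/-- The local 2-divergence `Ψ₂(P)` of the diffusion matrix. -/
noncomputable def psi2Diff {n : ℕ} (G : SimpleGraph (Fin n)) [DecidableRel G.Adj]
    (γ : ℝ) : ℝ :=
  ⨆ w : Fin n, Real.sqrt (⨆ T : ℕ, ∑ t ∈ Finset.range (T + 1),
    edgeSum G fun u v => ((diffMatrix G γ ^ t) w u - (diffMatrix G γ ^ t) w v) ^ 2)

/-- Supremum of `g v` over the neighbors `v` of `u` (zero if `u` is isolated). -/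
noncomputable def nbrSup {n : ℕ} (G : SimpleGraph (Fin n)) (u : Fin n)
    (g : Fin n → ℝ) : ℝ :=
  ⨆ v : G.neighborSet u, g v

/-- The refined local 2-divergence `Υ₂(P)` of the diffusion matrix. -/
noncomputable def ups2Diff {n : ℕ} (G : SimpleGraph (Fin n)) [DecidableRel G.Adj]
    (γ : ℝ) : ℝ :=
  ⨆ w : Fin n, Real.sqrt (⨆ T : ℕ, ∑ t ∈ Finset.range (T + 1),
    (1 / 2) * ∑ u : Fin n,
      nbrSup G u fun v => ((diffMatrix G γ ^ t) w u - (diffMatrix G γ ^ t) w v) ^ 2)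

open Classical in
/-- Randomly rounded flow along the edge `[u:v]` (`u < v`): the continuous flow
`f = (x_v - x_u)/(γΔ)` from `v` to `u` is rounded up iff the uniform sample
`r u v ∈ [0,1]` is below the fractional part of `f` (so `⌈f⌉` has probability
`f - ⌊f⌋`, and an integral flow is never altered). -/
noncomputable def diffFlow {n : ℕ} (G : SimpleGraph (Fin n)) [DecidableRel G.Adj]
    (γ : ℝ) (r : Fin n → Fin n → ℝ) (x : Fin n → ℤ) (u v : Fin n) : ℤ :=
  if r u v < Int.fract (((x v : ℝ) - (x u : ℝ)) / (γ * G.maxDegree))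
  then ⌈((x v : ℝ) - (x u : ℝ)) / (γ * G.maxDegree)⌉
  else ⌊((x v : ℝ) - (x u : ℝ)) / (γ * G.maxDegree)⌋

/-- One round of the edge-based discrete diffusion protocol. -/
noncomputable def diffStep {n : ℕ} (G : SimpleGraph (Fin n)) [DecidableRel G.Adj]
    (γ : ℝ) (r : Fin n → Fin n → ℝ) (x : Fin n → ℤ) : Fin n → ℤ := fun u =>
  x u + ∑ v : Fin n,
    if G.Adj u v then (if u < v then diffFlow G γ r x u v else -diffFlow G γ r x v u)
    else 0

/-- The edge-based discrete diffusion process: round `t ≥ 1` uses the uniform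
samples `R t : Fin n → Fin n → ℝ` (read at pairs `(u,v)` with `u < v`). -/
noncomputable def diffLoads {n : ℕ} (G : SimpleGraph (Fin n)) [DecidableRel G.Adj]
    (γ : ℝ) (R : ℕ → Fin n → Fin n → ℝ) (x : Fin n → ℤ) : ℕ → Fin n → ℤ
  | 0 => x
  | t + 1 => diffStep G γ (R (t + 1)) (diffLoads G γ R x t)

/-!
Write `D_t = x^{(t)} - ξ^{(t)}`, `L` for the graph Laplacian and `K = γΔ/(2 - 2/γ)`. For a test
vector `a`, `D_{t+1} · a` is `D_t · Pa` plus the fresh rounding errors of the edges `[u:v]`,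
weighted by `a_u - a_v`. Given the past, these errors are independent, centered and confined to
intervals of length one, so by Hoeffding's lemma they contribute a subgaussian increment with
parameter `¼ ∑ (a_u - a_v)² = ¼ a · La`. On the other hand `P = 1 - L/(γΔ)` and `|La|² ≤ 2Δ a · La`
give `K |Pa|² + a · La ≤ K |a|²`: the increment is paid for by the loss of energy from `a` to `Pa`.
Hence `D_t · a` is subgaussian with parameter `K |a|² / 4` for every `t`, by induction on `t`. The
theorem is the Chernoff bound for the unit vectors, followed by a union bound.
-/

section Laplacian

open Matrix

variable {V : Type*} [Fintype V] [DecidableEq V] (G : SimpleGraph V) [DecidableRel G.Adj]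
  (a : V → ℝ)

lemma lapMatrix_mulVec_apply_eq_sum (u : V) :
    (G.lapMatrix ℝ *ᵥ a) u = ∑ v, if G.Adj u v then a u - a v else 0 := by
  rw [G.lapMatrix_mulVec_apply, ← Finset.sum_filter, ← SimpleGraph.neighborFinset_eq_filter,
    Finset.sum_sub_distrib, Finset.sum_const, G.card_neighborFinset_eq_degree, nsmul_eq_mul]

lemma dotProduct_lapMatrix_mulVec :
    a ⬝ᵥ G.lapMatrix ℝ *ᵥ a = (∑ u, ∑ v, if G.Adj u v then (a u - a v) ^ 2 else 0) / 2 := by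
  rw [← toLinearMap₂'_apply', SimpleGraph.lapMatrix_toLinearMap₂']

lemma dotProduct_lapMatrix_mulVec_nonneg : 0 ≤ a ⬝ᵥ G.lapMatrix ℝ *ᵥ a := by
  rw [dotProduct_lapMatrix_mulVec]
  positivity

lemma lapMatrix_mulVec_dotProduct_self_le :
    (G.lapMatrix ℝ *ᵥ a) ⬝ᵥ (G.lapMatrix ℝ *ᵥ a) ≤
      2 * G.maxDegree * (a ⬝ᵥ G.lapMatrix ℝ *ᵥ a) := by
  rw [dotProduct_lapMatrix_mulVec, mul_comm 2, mul_assoc, mul_div_cancel₀ _ two_ne_zero,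
    Finset.mul_sum]
  refine Finset.sum_le_sum fun u _ ↦ ?_
  rw [lapMatrix_mulVec_apply_eq_sum, ← sq, ← Finset.sum_filter, ← Finset.sum_filter,
    ← SimpleGraph.neighborFinset_eq_filter]
  calc (∑ v ∈ G.neighborFinset u, (a u - a v)) ^ 2
      ≤ (G.neighborFinset u).card * ∑ v ∈ G.neighborFinset u, (a u - a v) ^ 2 :=
        sq_sum_le_card_mul_sum_sq
    _ ≤ G.maxDegree * ∑ v ∈ G.neighborFinset u, (a u - a v) ^ 2 := by
        rw [G.card_neighborFinset_eq_degree]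
        gcongr
        exact G.degree_le_maxDegree u

lemma one_sub_smul_lapMatrix_mulVec_dotProduct_self_add_le (c : ℝ) :
    ((1 - c • G.lapMatrix ℝ) *ᵥ a) ⬝ᵥ ((1 - c • G.lapMatrix ℝ) *ᵥ a) +
      2 * c * (1 - c * G.maxDegree) * (a ⬝ᵥ G.lapMatrix ℝ *ᵥ a) ≤ a ⬝ᵥ a := by
  have h_expand : ((1 - c • G.lapMatrix ℝ) *ᵥ a) ⬝ᵥ ((1 - c • G.lapMatrix ℝ) *ᵥ a) =
      a ⬝ᵥ a - 2 * c * (a ⬝ᵥ G.lapMatrix ℝ *ᵥ a) +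
        c ^ 2 * ((G.lapMatrix ℝ *ᵥ a) ⬝ᵥ (G.lapMatrix ℝ *ᵥ a)) := by
    simp only [sub_mulVec, one_mulVec, smul_mulVec, sub_dotProduct, dotProduct_sub,
      smul_dotProduct, dotProduct_smul, smul_eq_mul, dotProduct_comm (G.lapMatrix ℝ *ᵥ a) a]
    ring
  have h_sq := mul_le_mul_of_nonneg_left (lapMatrix_mulVec_dotProduct_self_le G a) (sq_nonneg c)
  linarith

end Laplacian

section Subgaussian

open MeasureTheory ProbabilityTheory
open scoped NNReal

lemma hasSubgaussianMGF_mono {Ω : Type*} [MeasurableSpace Ω] {μ : Measure Ω} {X : Ω → ℝ}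
    {c d : ℝ≥0} (h : HasSubgaussianMGF X c μ) (hcd : c ≤ d) : HasSubgaussianMGF X d μ where
  integrable_exp_mul := h.integrable_exp_mul
  mgf_le t := (h.mgf_le t).trans (by gcongr)

lemma measureReal_abs_ge_le {Ω : Type*} [MeasurableSpace Ω] {μ : Measure Ω} {X : Ω → ℝ}
    {c : ℝ≥0} (h : HasSubgaussianMGF X c μ) {ε : ℝ} (hε : 0 ≤ ε) :
    μ.real {ω | ε ≤ |X ω|} ≤ 2 * Real.exp (-ε ^ 2 / (2 * c)) := by
  have h_union : {ω | ε ≤ |X ω|} = {ω | ε ≤ X ω} ∪ {ω | ε ≤ (-X) ω} := by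
    ext ω
    exact le_abs (b := X ω)
  rw [h_union, two_mul]
  exact (measureReal_union_le _ _).trans (add_le_add (h.measure_ge_le hε) (h.neg.measure_ge_le hε))

lemma hasSubgaussianMGF_fst_add {α β : Type*} [MeasurableSpace α] [MeasurableSpace β]
    {μ : Measure α} {ν : Measure β} [SFinite μ] [SFinite ν] {f : α → ℝ} {g : α × β → ℝ}
    {c d : ℝ≥0} (hf : HasSubgaussianMGF f c μ) (hg_meas : AEStronglyMeasurable g (μ.prod ν))
    (hg : ∀ᵐ x ∂μ, HasSubgaussianMGF (fun y ↦ g (x, y)) d ν) :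
    HasSubgaussianMGF (fun p ↦ f p.1 + g p) (c + d) (μ.prod ν) := by
  have h_meas (s : ℝ) :
      AEStronglyMeasurable (fun p ↦ Real.exp (s * (f p.1 + g p))) (μ.prod ν) :=
    Real.continuous_exp.comp_aestronglyMeasurable
      ((hf.aestronglyMeasurable.comp_fst.add hg_meas).const_mul s)
  have h_inner (s : ℝ) : ∀ᵐ x ∂μ, ∫ y, Real.exp (s * (f x + g (x, y))) ∂ν ≤
      Real.exp (s * f x) * Real.exp (d * s ^ 2 / 2) := by
    filter_upwards [hg] with x hx
    simp_rw [mul_add, Real.exp_add]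
    rw [integral_const_mul]
    gcongr
    exact hx.mgf_le s
  have h_int (s : ℝ) : Integrable (fun p ↦ Real.exp (s * (f p.1 + g p))) (μ.prod ν) := by
    refine (integrable_prod_iff (h_meas s)).2 ⟨?_, ?_⟩
    · filter_upwards [hg] with x hx
      simp_rw [mul_add, Real.exp_add]
      exact (hx.integrable_exp_mul s).const_mul _
    · simp_rw [Real.norm_eq_abs, Real.abs_exp]
      refine ((hf.integrable_exp_mul s).mul_const (Real.exp (d * s ^ 2 / 2))).mono'
        (h_meas s).integral_prod_right' ?_
      filter_upwards [h_inner s] with x hx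
      rwa [Real.norm_of_nonneg (integral_nonneg fun _ ↦ (Real.exp_pos _).le)]
  refine ⟨h_int, fun s ↦ ?_⟩
  calc mgf (fun p ↦ f p.1 + g p) (μ.prod ν) s
      = ∫ x, ∫ y, Real.exp (s * (f x + g (x, y))) ∂ν ∂μ := integral_prod _ (h_int s)
    _ ≤ ∫ x, Real.exp (s * f x) * Real.exp (d * s ^ 2 / 2) ∂μ :=
        integral_mono_ae (h_int s).integral_prod_left ((hf.integrable_exp_mul s).mul_const _)
          (h_inner s)
    _ ≤ Real.exp (c * s ^ 2 / 2) * Real.exp (d * s ^ 2 / 2) := by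
        rw [integral_mul_const]
        gcongr
        exact hf.mgf_le s
    _ = Real.exp (↑(c + d) * s ^ 2 / 2) := by
        rw [← Real.exp_add, NNReal.coe_add]
        ring_nf

end Subgaussian

section RandomizedRounding

open MeasureTheory ProbabilityTheory

/-- The uniform distribution on `[0,1]`. -/
noncomputable abbrev uniformUnit : Measure ℝ := (volume : Measure ℝ).restrict (Set.Icc 0 1)

instance : IsProbabilityMeasure uniformUnit := ⟨by simp⟩

lemma uniformUnit_real_Iio {p : ℝ} (hp0 : 0 ≤ p) (hp1 : p ≤ 1) :
    uniformUnit.real (Set.Iio p) = p := by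
  have h_inter : Set.Iio p ∩ Set.Icc 0 1 = Set.Ico 0 p := by
    ext r
    simp only [Set.mem_inter_iff, Set.mem_Iio, Set.mem_Icc, Set.mem_Ico]
    grind
  rw [measureReal_restrict_apply measurableSet_Iio, h_inter, Real.volume_real_Ico_of_le hp0,
    sub_zero]

/-- The randomized rounding of `f`: if `r` is uniform on `[0,1]`, it is `⌈f⌉` with probability
`f - ⌊f⌋` and `⌊f⌋` otherwise. -/
noncomputable def randomRound (f r : ℝ) : ℤ := if r < Int.fract f then ⌈f⌉ else ⌊f⌋

lemma measurable_randomRound : Measurable fun p : ℝ × ℝ ↦ randomRound p.1 p.2 :=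
  Measurable.ite (measurableSet_lt measurable_snd measurable_fst.fract) measurable_fst.ceil
    measurable_fst.floor

lemma randomRound_sub_mem_Icc (f r : ℝ) :
    (randomRound f r : ℝ) - f ∈ Set.Icc (-Int.fract f) (1 - Int.fract f) := by
  have h_floor := Int.self_sub_floor f
  have h_le_ceil := Int.le_ceil f
  have h_ceil_le : (⌈f⌉ : ℝ) ≤ ⌊f⌋ + 1 := mod_cast Int.ceil_le_floor_add_one f
  have h_fract := Int.fract_nonneg f
  unfold randomRound
  split_ifs <;> constructor <;> linarith

lemma integral_randomRound_sub (f : ℝ) :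
    ∫ r, ((randomRound f r : ℝ) - f) ∂uniformUnit = 0 := by
  have h_indicator (r : ℝ) : (randomRound f r : ℝ) - f =
      (Set.Iio (Int.fract f)).indicator (fun _ ↦ (⌈f⌉ - ⌊f⌋ : ℝ)) r - Int.fract f := by
    have h_fract := Int.self_sub_floor f
    simp only [randomRound, Set.indicator_apply, Set.mem_Iio]
    split_ifs <;> linarith
  have h_mean : Int.fract f * (⌈f⌉ - ⌊f⌋ : ℝ) = Int.fract f := by
    rcases eq_or_ne (Int.fract f) 0 with h | h
    · rw [h, zero_mul]
    · rw [Int.ceil_eq_add_one_sub_fract h, ← Int.self_sub_floor]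
      ring
  simp_rw [h_indicator]
  rw [integral_sub ((integrable_const _).indicator measurableSet_Iio) (integrable_const _),
    integral_indicator_const _ measurableSet_Iio,
    uniformUnit_real_Iio (Int.fract_nonneg f) (Int.fract_lt_one f).le, smul_eq_mul, h_mean,
    integral_const, probReal_univ, one_smul, sub_self]

lemma hasSubgaussianMGF_randomRound_sub (f : ℝ) :
    HasSubgaussianMGF (fun r ↦ (randomRound f r : ℝ) - f) (1 / 4) uniformUnit := by
  have h_meas : Measurable fun r ↦ (randomRound f r : ℝ) :=
    Measurable.of_discrete.comp (measurable_randomRound.comp measurable_prodMk_left)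
  convert hasSubgaussianMGF_of_mem_Icc_of_integral_eq_zero (h_meas.sub_const f).aemeasurable
    (.of_forall (randomRound_sub_mem_Icc f)) (integral_randomRound_sub f) using 1
  norm_num

lemma hasSubgaussianMGF_sum_mul_randomRound_sub {ι : Type*} [Fintype ι] (s : Finset ι)
    (c f : ι → ℝ) :
    HasSubgaussianMGF (fun η : ι → ℝ ↦ ∑ i ∈ s, c i * ((randomRound (f i) (η i) : ℝ) - f i))
      ((∑ i ∈ s, c i ^ 2) / 4).toNNReal (Measure.pi fun _ ↦ uniformUnit) := by
  have h_subG (i : ι) := (hasSubgaussianMGF_randomRound_sub (f i)).const_mul (c i)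
  have h_indep := iIndepFun_pi fun i ↦ (h_subG i).aemeasurable
  have h_eval (i : ι) := HasSubgaussianMGF.of_map (μ := Measure.pi fun _ : ι ↦ uniformUnit)
    (measurable_pi_apply i).aemeasurable
    ((measurePreserving_eval (fun _ : ι ↦ uniformUnit) i).map_eq ▸ h_subG i)
  convert HasSubgaussianMGF.sum_of_iIndepFun h_indep (s := s) fun i _ ↦ h_eval i using 1
  ext
  rw [Real.coe_toNNReal _ (by positivity), NNReal.coe_sum, Finset.sum_div]
  exact Finset.sum_congr rfl fun i _ ↦ div_eq_mul_one_div (c i ^ 2) 4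

end RandomizedRounding

section LastRound

open MeasureTheory

variable {α N : Type*} {t : ℕ}

/-- Splits the samples of `t + 1` rounds, each of which reads one sample per element of `N`, into
those of the first `t` rounds and those of the last round. -/
def splitLastRound (ω : Fin (t + 1) × N → α) : (Fin t × N → α) × (N → α) :=
  (fun i ↦ ω (i.1.castSucc, i.2), fun j ↦ ω (Fin.last t, j))

lemma measurePreserving_splitLastRound [MeasurableSpace α] [Fintype N] (μ : Measure α)
    [SigmaFinite μ] :
    MeasurePreserving (splitLastRound (α := α) (N := N) (t := t)) (Measure.pi fun _ ↦ μ)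
      ((Measure.pi fun _ ↦ μ).prod (Measure.pi fun _ ↦ μ)) := by
  let e : (Fin t × N) ⊕ N ≃ Fin (t + 1) × N :=
    ((Equiv.refl _).sumCongr (Equiv.uniqueProd N (Fin 1)).symm).trans
      ((Equiv.sumProdDistrib _ _ _).symm.trans (finSumFinEquiv.prodCongr (Equiv.refl N)))
  exact (measurePreserving_sumPiEquivProdPi fun _ ↦ μ).comp
    (measurePreserving_piCongrLeft (fun _ ↦ μ) e).symm

end LastRound

section Diffusion

open Matrix MeasureTheory ProbabilityTheory

variable {n : ℕ} (G : SimpleGraph (Fin n)) [DecidableRel G.Adj] (γ : ℝ)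

lemma diffMatrix_eq_one_sub_smul_lapMatrix :
    diffMatrix G γ = 1 - (1 / (γ * G.maxDegree)) • G.lapMatrix ℝ := by
  ext u v
  rcases eq_or_ne u v with rfl | huv
  · simp [diffMatrix, SimpleGraph.lapMatrix, SimpleGraph.degMatrix, div_eq_inv_mul]
  · simp [diffMatrix, SimpleGraph.lapMatrix, SimpleGraph.degMatrix, SimpleGraph.adjMatrix_apply,
      huv]

lemma isSymm_diffMatrix : (diffMatrix G γ).IsSymm := by
  rw [diffMatrix_eq_one_sub_smul_lapMatrix]
  exact isSymm_one.sub ((G.isSymm_lapMatrix ℝ).smul _)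

/-- The constant `γΔ/(2 - 2/γ)`, the bound on `Ψ₂(P)²` for the diffusion matrix. -/
noncomputable def psi2SqBound : ℝ := γ * G.maxDegree / (2 - 2 / γ)

variable {γ} in
lemma psi2SqBound_pos (hγ : 1 < γ) (hΔ : 0 < G.maxDegree) : 0 < psi2SqBound G γ := by
  have h_div : 2 / γ < 2 := div_lt_self two_pos hγ
  exact div_pos (by positivity) (by linarith)

variable {γ} in
lemma diffMatrix_mulVec_dotProduct_self_add_le (hγ : 1 < γ) (hΔ : 0 < G.maxDegree)
    (a : Fin n → ℝ) :
    psi2SqBound G γ * ((diffMatrix G γ *ᵥ a) ⬝ᵥ (diffMatrix G γ *ᵥ a)) +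
      a ⬝ᵥ G.lapMatrix ℝ *ᵥ a ≤ psi2SqBound G γ * (a ⬝ᵥ a) := by
  have h_bound_pos := psi2SqBound_pos G hγ hΔ
  set c := 1 / (γ * G.maxDegree) with hc
  have h_mul_eq_one : psi2SqBound G γ * (2 * c * (1 - c * G.maxDegree)) = 1 := by
    have h_sub : γ - 1 ≠ 0 := by linarith
    have h_deg : (G.maxDegree : ℝ) ≠ 0 := mod_cast hΔ.ne'
    rw [psi2SqBound, hc]
    field_simp
  rw [diffMatrix_eq_one_sub_smul_lapMatrix]
  calc _ = psi2SqBound G γ *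
        (((1 - c • G.lapMatrix ℝ) *ᵥ a) ⬝ᵥ ((1 - c • G.lapMatrix ℝ) *ᵥ a) +
          2 * c * (1 - c * G.maxDegree) * (a ⬝ᵥ G.lapMatrix ℝ *ᵥ a)) := by
        linear_combination (-(a ⬝ᵥ G.lapMatrix ℝ *ᵥ a)) * h_mul_eq_one
    _ ≤ psi2SqBound G γ * (a ⬝ᵥ a) := by
        gcongr
        exact one_sub_smul_lapMatrix_mulVec_dotProduct_self_add_le G a c

lemma edgeSum_eq_sum_filter (g : Fin n → Fin n → ℝ) :
    edgeSum G g = ∑ p : Fin n × Fin n with p.1 < p.2 ∧ G.Adj p.1 p.2, g p.1 p.2 := by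
  rw [Finset.sum_filter, Fintype.sum_prod_type, edgeSum]

lemma sum_adj_eq_edgeSum (h : Fin n → Fin n → ℝ) :
    (∑ u, ∑ v, if G.Adj u v then h u v else 0) = edgeSum G fun u v ↦ h u v + h v u := by
  have h_split (u v : Fin n) : (if G.Adj u v then h u v else 0) =
      (if u < v ∧ G.Adj u v then h u v else 0) + if v < u ∧ G.Adj v u then h u v else 0 := by
    rcases lt_trichotomy u v with huv | rfl | huv
    · simp [huv, huv.not_gt]
    · simp
    · simp [huv, huv.not_gt, G.adj_comm u v]
  simp_rw [h_split, Finset.sum_add_distrib]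
  rw [Finset.sum_comm (f := fun u v ↦ if v < u ∧ G.Adj v u then h u v else 0)]
  simp_rw [edgeSum, ← Finset.sum_add_distrib, ite_add_ite, add_zero]

lemma edgeSum_sub_sq (a : Fin n → ℝ) :
    edgeSum G (fun u v ↦ (a u - a v) ^ 2) = a ⬝ᵥ G.lapMatrix ℝ *ᵥ a := by
  rw [dotProduct_lapMatrix_mulVec, sum_adj_eq_edgeSum, edgeSum_eq_sum_filter,
    edgeSum_eq_sum_filter, Finset.sum_div]
  exact Finset.sum_congr rfl fun p _ ↦ by ring

lemma diffFlow_eq_randomRound (r : Fin n → Fin n → ℝ) (x : Fin n → ℤ) (u v : Fin n) :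
    diffFlow G γ r x u v = randomRound (((x v : ℝ) - x u) / (γ * G.maxDegree)) (r u v) :=
  rfl

lemma measurable_diffStep :
    Measurable fun p : (Fin n → Fin n → ℝ) × (Fin n → ℤ) ↦ diffStep G γ p.1 p.2 := by
  have h_load (u : Fin n) :
      Measurable fun p : (Fin n → Fin n → ℝ) × (Fin n → ℤ) ↦ (p.2 u : ℝ) :=
    Measurable.of_discrete.comp (measurable_pi_apply u |>.comp measurable_snd)
  have h_flow (u v : Fin n) :
      Measurable fun p : (Fin n → Fin n → ℝ) × (Fin n → ℤ) ↦ diffFlow G γ p.1 p.2 u v := by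
    simp only [diffFlow_eq_randomRound]
    exact measurable_randomRound.comp
      ((((h_load v).sub (h_load u)).div_const _).prodMk (by fun_prop))
  refine measurable_pi_iff.2 fun u ↦ ?_
  unfold diffStep
  refine Measurable.add (by fun_prop) (Finset.measurable_sum _ fun v _ ↦ ?_)
  split_ifs
  exacts [h_flow u v, (h_flow v u).neg, measurable_const]

/-- The error vector `e^{(t)} = x^{(t)} - x^{(t-1)} P` of a round started from the loads `x`. -/
noncomputable def roundError (r : Fin n → Fin n → ℝ) (x : Fin n → ℤ) : Fin n → ℝ :=
  (fun u ↦ (diffStep G γ r x u : ℝ)) - (fun u ↦ (x u : ℝ)) ᵥ* diffMatrix G γ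

lemma roundError_apply (r : Fin n → Fin n → ℝ) (x : Fin n → ℤ) (u : Fin n) :
    roundError G γ r x u = ∑ v, if G.Adj u v then
      if u < v then diffFlow G γ r x u v - ((x v : ℝ) - x u) / (γ * G.maxDegree)
      else -(diffFlow G γ r x v u - ((x u : ℝ) - x v) / (γ * G.maxDegree))
      else 0 := by
  rw [roundError, ← mulVec_transpose, isSymm_diffMatrix, diffMatrix_eq_one_sub_smul_lapMatrix,
    sub_mulVec, one_mulVec, smul_mulVec, Pi.sub_apply, Pi.sub_apply, Pi.smul_apply,
    lapMatrix_mulVec_apply_eq_sum, smul_eq_mul, Finset.mul_sum, diffStep]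
  push_cast
  rw [add_sub_sub_cancel, ← Finset.sum_add_distrib]
  refine Finset.sum_congr rfl fun v _ ↦ ?_
  split_ifs <;> ring

lemma roundError_dotProduct (r : Fin n → Fin n → ℝ) (x : Fin n → ℤ) (a : Fin n → ℝ) :
    roundError G γ r x ⬝ᵥ a = edgeSum G fun u v ↦
      (a u - a v) * (diffFlow G γ r x u v - ((x v : ℝ) - x u) / (γ * G.maxDegree)) := by
  simp_rw [dotProduct, roundError_apply, Finset.sum_mul, ite_mul, zero_mul]
  rw [sum_adj_eq_edgeSum, edgeSum_eq_sum_filter, edgeSum_eq_sum_filter]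
  refine Finset.sum_congr rfl fun p hp ↦ ?_
  have h_lt : p.1 < p.2 := (Finset.mem_filter.1 hp).2.1
  rw [if_pos h_lt, if_neg h_lt.not_gt]
  ring

lemma measurable_roundError_dotProduct (a : Fin n → ℝ) :
    Measurable fun p : (Fin n → Fin n → ℝ) × (Fin n → ℤ) ↦ roundError G γ p.1 p.2 ⬝ᵥ a := by
  have h_cast : Measurable fun x : Fin n → ℤ ↦ fun u ↦ (x u : ℝ) := .of_discrete
  have h_error : Measurable fun p : (Fin n → Fin n → ℝ) × (Fin n → ℤ) ↦ roundError G γ p.1 p.2 :=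
    (h_cast.comp (measurable_diffStep G γ)).sub
      ((Measurable.of_discrete (f := fun x : Fin n → ℤ ↦
        (fun u ↦ (x u : ℝ)) ᵥ* diffMatrix G γ)).comp measurable_snd)
  exact Finset.measurable_sum _ fun u _ ↦ ((measurable_pi_apply u).comp h_error).mul_const _

lemma hasSubgaussianMGF_roundError_dotProduct (x : Fin n → ℤ) (a : Fin n → ℝ) :
    HasSubgaussianMGF
      (fun η : Fin n × Fin n → ℝ ↦ roundError G γ (fun u v ↦ η (u, v)) x ⬝ᵥ a)
      ((a ⬝ᵥ G.lapMatrix ℝ *ᵥ a) / 4).toNNReal (Measure.pi fun _ ↦ uniformUnit) := by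
  simp_rw [roundError_dotProduct, ← edgeSum_sub_sq, edgeSum_eq_sum_filter, diffFlow_eq_randomRound]
  exact hasSubgaussianMGF_sum_mul_randomRound_sub _
    (fun p : Fin n × Fin n ↦ a p.1 - a p.2) _

/-- The loads after `t` rounds, round `s + 1` being driven by the samples `ω (s, ·)`. The value
`1` used for the rounds after the `t`-th is never read. -/
noncomputable def sampledLoads (x : Fin n → ℤ) (t : ℕ) (ω : Fin t × Fin n × Fin n → ℝ) :
    Fin n → ℤ :=
  diffLoads G γ (fun s u v ↦ if h : s - 1 < t then ω (⟨s - 1, h⟩, u, v) else 1) x t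

lemma diffLoads_congr {R R' : ℕ → Fin n → Fin n → ℝ} (x : Fin n → ℤ) {t : ℕ}
    (h : ∀ s < t, R (s + 1) = R' (s + 1)) : diffLoads G γ R x t = diffLoads G γ R' x t := by
  induction t with
  | zero => rfl
  | succ t ih => rw [diffLoads, diffLoads, h t t.lt_succ_self, ih fun s hs ↦ h s (by lia)]

lemma sampledLoads_succ (x : Fin n → ℤ) {t : ℕ} (ω : Fin (t + 1) × Fin n × Fin n → ℝ) :
    sampledLoads G γ x (t + 1) ω = diffStep G γ (fun u v ↦ (splitLastRound ω).2 (u, v))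
      (sampledLoads G γ x t (splitLastRound ω).1) := by
  rw [sampledLoads, sampledLoads, diffLoads]
  congr 1
  · simp [splitLastRound, Fin.last]
  · refine diffLoads_congr G γ x fun s hs ↦ ?_
    simp [splitLastRound, hs, Nat.lt_succ_of_lt hs]

lemma measurable_sampledLoads (x : Fin n → ℤ) (t : ℕ) : Measurable (sampledLoads G γ x t) := by
  induction t with
  | zero => exact measurable_const
  | succ t ih =>
    have h_split := (measurePreserving_splitLastRound (N := Fin n × Fin n) (t := t)
      (volume : Measure ℝ)).measurable
    simp_rw [funext (sampledLoads_succ G γ x (t := t))]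
    exact (measurable_diffStep G γ).comp
      ((by fun_prop : Measurable fun ω : Fin (t + 1) × Fin n × Fin n → ℝ ↦
        fun u v ↦ (splitLastRound ω).2 (u, v)).prodMk (ih.comp h_split.fst))

/-- The deviation `x^{(t)} - ξ^{(t)}` between the discrete and the continuous diffusion. -/
noncomputable def deviation (x : Fin n → ℤ) (t : ℕ) (ω : Fin t × Fin n × Fin n → ℝ) :
    Fin n → ℝ :=
  (fun w ↦ (sampledLoads G γ x t ω w : ℝ)) - (fun u ↦ (x u : ℝ)) ᵥ* diffMatrix G γ ^ t

lemma deviation_zero (x : Fin n → ℤ) (ω : Fin 0 × Fin n × Fin n → ℝ) :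
    deviation G γ x 0 ω = 0 := by
  rw [deviation, pow_zero, vecMul_one, sub_eq_zero]
  rfl

lemma deviation_succ (x : Fin n → ℤ) {t : ℕ} (ω : Fin (t + 1) × Fin n × Fin n → ℝ) :
    deviation G γ x (t + 1) ω =
      deviation G γ x t (splitLastRound ω).1 ᵥ* diffMatrix G γ +
        roundError G γ (fun u v ↦ (splitLastRound ω).2 (u, v))
          (sampledLoads G γ x t (splitLastRound ω).1) := by
  rw [deviation, deviation, roundError, sampledLoads_succ, sub_vecMul, vecMul_vecMul, ← pow_succ]
  abel

lemma deviation_succ_dotProduct (x : Fin n → ℤ) {t : ℕ} (ω : Fin (t + 1) × Fin n × Fin n → ℝ)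
    (a : Fin n → ℝ) :
    deviation G γ x (t + 1) ω ⬝ᵥ a =
      deviation G γ x t (splitLastRound ω).1 ⬝ᵥ diffMatrix G γ *ᵥ a +
        roundError G γ (fun u v ↦ (splitLastRound ω).2 (u, v))
          (sampledLoads G γ x t (splitLastRound ω).1) ⬝ᵥ a := by
  rw [deviation_succ, add_dotProduct, dotProduct_mulVec]

lemma measurable_roundError_sampledLoads_dotProduct (x : Fin n → ℤ) (t : ℕ) (a : Fin n → ℝ) :
    Measurable fun p : (Fin t × Fin n × Fin n → ℝ) × (Fin n × Fin n → ℝ) ↦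
      roundError G γ (fun u v ↦ p.2 (u, v)) (sampledLoads G γ x t p.1) ⬝ᵥ a := by
  have h_curry : Measurable fun (η : Fin n × Fin n → ℝ) u v ↦ η (u, v) := by fun_prop
  have h_pair : Measurable fun p : (Fin t × Fin n × Fin n → ℝ) × (Fin n × Fin n → ℝ) ↦
      (fun u v ↦ p.2 (u, v), sampledLoads G γ x t p.1) :=
    (h_curry.comp measurable_snd).prodMk ((measurable_sampledLoads G γ x t).comp measurable_fst)
  exact ((measurable_roundError_dotProduct G γ a).comp h_pair :)

variable {γ} in
theorem hasSubgaussianMGF_deviation_dotProduct (hγ : 1 < γ) (hΔ : 0 < G.maxDegree)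
    (x : Fin n → ℤ) (t : ℕ) (a : Fin n → ℝ) :
    HasSubgaussianMGF (fun ω ↦ deviation G γ x t ω ⬝ᵥ a)
      (psi2SqBound G γ * (a ⬝ᵥ a) / 4).toNNReal
      (Measure.pi fun _ ↦ uniformUnit) := by
  induction t generalizing a with
  | zero =>
    simp_rw [deviation_zero, zero_dotProduct]
    exact hasSubgaussianMGF_mono .fun_zero zero_le
  | succ t ih =>
    have h_split := measurePreserving_splitLastRound (N := Fin n × Fin n) (t := t) uniformUnit
    have h_add := hasSubgaussianMGF_fst_add (ih (diffMatrix G γ *ᵥ a))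
      (measurable_roundError_sampledLoads_dotProduct G γ x t a).aestronglyMeasurable
      (.of_forall fun ω ↦ hasSubgaussianMGF_roundError_dotProduct G γ (sampledLoads G γ x t ω) a)
    rw [← h_split.map_eq] at h_add
    simp_rw [deviation_succ_dotProduct]
    refine hasSubgaussianMGF_mono (h_add.of_map h_split.measurable.aemeasurable) ?_
    have h_sq_nonneg : 0 ≤ (diffMatrix G γ *ᵥ a) ⬝ᵥ (diffMatrix G γ *ᵥ a) :=
      Finset.sum_nonneg fun u _ ↦ mul_self_nonneg _
    have h_bound_pos := psi2SqBound_pos G hγ hΔ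
    have h_lap := dotProduct_lapMatrix_mulVec_nonneg G a
    rw [← Real.toNNReal_add (by positivity) (by positivity), ← add_div]
    gcongr
    exact diffMatrix_mulVec_dotProduct_self_add_le G hγ hΔ a

variable {γ} in
theorem measureReal_exists_le_abs_deviation_le (hγ : 1 < γ) (hΔ : 0 < G.maxDegree)
    (x : Fin n → ℤ) (t : ℕ) {ε : ℝ} (hε : 0 ≤ ε) :
    (Measure.pi fun _ ↦ uniformUnit).real {ω | ∃ w, ε ≤ |deviation G γ x t ω w|} ≤
      n * (2 * Real.exp (-2 * ε ^ 2 / psi2SqBound G γ)) := by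
  have h_bound_pos := psi2SqBound_pos G hγ hΔ
  have h_coord (w : Fin n) : (Measure.pi fun _ ↦ uniformUnit).real
      {ω | ε ≤ |deviation G γ x t ω w|} ≤
        2 * Real.exp (-2 * ε ^ 2 / psi2SqBound G γ) := by
    have h_tail := measureReal_abs_ge_le
      (hasSubgaussianMGF_deviation_dotProduct G hγ hΔ x t (Pi.single w 1)) hε
    simp_rw [dotProduct_single_one, Pi.single_eq_same, mul_one] at h_tail
    rw [Real.coe_toNNReal _ (by positivity)] at h_tail
    convert h_tail using 3
    field
  calc _ = (Measure.pi fun _ ↦ uniformUnit).real (⋃ w, {ω | ε ≤ |deviation G γ x t ω w|}) := by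
        rw [Set.ofPred_exists]
    _ ≤ ∑ w, (Measure.pi fun _ ↦ uniformUnit).real {ω | ε ≤ |deviation G γ x t ω w|} :=
        measureReal_iUnion_fintype_le _
    _ ≤ ∑ _w : Fin n, 2 * Real.exp (-2 * ε ^ 2 / psi2SqBound G γ) :=
        Finset.sum_le_sum fun w _ ↦ h_coord w
    _ = _ := by
        rw [Finset.sum_const, Finset.card_univ, Fintype.card_fin, nsmul_eq_mul]

end Diffusion

open MeasureTheory in
/-- Edge-based discrete diffusion protocol with independent
uniform `[0,1]` samples (one per edge per round) used for the randomized roundings: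
for any round `t`,
`P( max_w |x_w^{(t)} - ξ_w^{(t)}| ≥ 4 √(log n) √(γΔ/(2-2/γ)) ) ≤ 2/n`. -/
theorem stmt19 {n : ℕ} (hn : 2 ≤ n) (G : SimpleGraph (Fin n)) [DecidableRel G.Adj]
    (hΔ : 0 < G.maxDegree) (γ : ℝ) (hγ : 1 < γ) (x : Fin n → ℤ) (t : ℕ) :
    (Measure.pi fun _ : Fin t × Fin n × Fin n =>
        (volume : Measure ℝ).restrict (Set.Icc (0 : ℝ) 1))
      {ω | ∃ w : Fin n,
        4 * Real.sqrt (Real.log n) * Real.sqrt (γ * G.maxDegree / (2 - 2 / γ)) ≤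
          |(diffLoads G γ
              (fun s u v => if h : s - 1 < t then ω (⟨s - 1, h⟩, u, v) else 1)
              x t w : ℝ)
            - Matrix.vecMul (fun u => (x u : ℝ)) (diffMatrix G γ ^ t) w|}
      ≤ ENNReal.ofReal (2 / n) := by
  have h_n : (0 : ℝ) < n := by positivity
  have h_log : 0 ≤ Real.log n := Real.log_natCast_nonneg n
  have h_bound_pos := psi2SqBound_pos G hγ hΔ
  set ε := 4 * √(Real.log n) * √(psi2SqBound G γ) with hε
  have h_exponent : -2 * ε ^ 2 / psi2SqBound G γ = -(32 * Real.log n) := by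
    rw [hε, mul_pow, mul_pow, Real.sq_sqrt h_log, Real.sq_sqrt h_bound_pos.le,
      div_eq_iff h_bound_pos.ne']
    ring
  have h_tail_le : n * (2 * Real.exp (-2 * ε ^ 2 / psi2SqBound G γ)) ≤ 2 / n := calc
    _ ≤ n * (2 * Real.exp (-(Real.log n * 2))) := by
      rw [h_exponent, mul_comm 32]
      gcongr
      norm_num
    _ = 2 / n := by
      rw [Real.exp_neg, Real.exp_mul, Real.exp_log h_n, Real.rpow_two]
      field_simp
  have h_tail := measureReal_exists_le_abs_deviation_le G hγ hΔ x t (ε := ε) (by positivity)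
  exact ENNReal.le_ofReal_iff_toReal_le (measure_ne_top _ _) (by positivity) |>.2
    (h_tail.trans h_tail_le)

end LB
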